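/- Let p be a discrete Markov model on [n_1]×⋯×[n_d] (d ≥ 3) such that the rank of the k-th unfolding matrix of p is r_k for each k = 1,…,d−1. Let B_1 : [n_1]×[r_1] → ℝ be any matrix with orthonormal columns spanning the column space of the pair-marginal matrix p(x_1;x_2); for 2 ≤ k ≤ d−1 let B_k : [n_{k−1}]×[n_k]×[r_k] → ℝ be any tensor whose columns (as a matrix with rows indexed by (x_{k−1},x_k) and columns by α_k) are orthonormal and span the column space of the triple-marginal matrix p((x_{k−1},x_k);x_{k+1}); and let B_d(x_{d−1},x_d) = p(x_{d−1},x_d) (the pair marginal). Define A_1 = B_1 and, for 2 ≤ k ≤ d−1, A_k(x_k,α_k) = Σ_{x_{k−1}=1}^{n_{k−1}} B_k(x_{k−1},x_k,α_k). Then each of the equations G_1 = B_1; Σ_{α_{k−1}=1}^{r_{k−1}} A_{k−1}(x_{k−1},α_{k−1}) G_k(α_{k−1},x_k,α_k) = B_k(x_{k−1},x_k,α_k) for k = 2,…,d−1; and Σ_{α_{d−1}=1}^{r_{d−1}} A_{d−1}(x_{d−1},α_{d−1}) G_d(α_{d−1},x_d) = p(x_{d−1},x_d), has a unique solution, and the solutions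 G_1,…,G_d satisfy p(x_1,…,x_d) = Σ_{α_1,…,α_{d−1}} G_1(x_1,α_1) G_2(α_1,x_2,α_2) ⋯ G_d(α_{d−1},x_d) for all x, i.e., they are cores of a tensor train representation of p of rank (r_1,…,r_{d−1}). -/

import Mathlib

open scoped BigOperators
open Matrix

/-- Indices `(x_0, …, x_{k-1})` of the first `k` variables (sizes given by `n`). -/
abbrev PreIdx (n : ℕ → ℕ) (k : ℕ) := ∀ i : Fin k, Fin (n i)

/-- Indices `(x_k, …, x_{d-1})` of the variables with position `≥ k`. -/
abbrev SufIdx (n : ℕ → ℕ) (d k : ℕ) := ∀ i : {i : Fin d // k ≤ (i : ℕ)}, Fin (n i)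

/-- Indices of the variables with position in the window `[a, b)`. -/
abbrev MidIdx (n : ℕ → ℕ) (d a b : ℕ) :=
  ∀ i : {i : Fin d // a ≤ (i : ℕ) ∧ (i : ℕ) < b}, Fin (n i)

/-- Glue a prefix index and a suffix index into a full index. -/
def glue {n : ℕ → ℕ} {d k : ℕ} (x : PreIdx n k) (y : SufIdx n d k) : PreIdx n d :=
  fun i => if h : (i : ℕ) < k then x ⟨i, h⟩ else y ⟨i, Nat.le_of_not_lt h⟩

/-- The `k`-th unfolding matrix of a `d`-dimensional tensor `p`. -/
def unfold {n : ℕ → ℕ} {d : ℕ} (p : PreIdx n d → ℝ) (k : ℕ) :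
    Matrix (PreIdx n k) (SufIdx n d k) ℝ :=
  Matrix.of fun x y => p (glue x y)

/-- Column space of a matrix: span of its columns. -/
noncomputable def colSpace {R C : Type*} (M : Matrix R C ℝ) : Submodule ℝ (R → ℝ) :=
  Submodule.span ℝ (Set.range fun c => fun r => M r c)

/-- Row space of a matrix: span of its rows. -/
noncomputable def rowSpace {R C : Type*} (M : Matrix R C ℝ) : Submodule ℝ (C → ℝ) :=
  Submodule.span ℝ (Set.range fun r => fun c => M r c)

/-- Rank of a matrix (dimension of its column space). -/
noncomputable def mrank {R C : Type*} (M : Matrix R C ℝ) : ℕ :=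
  Module.finrank ℝ ↥(colSpace M)

/-- Restriction of a prefix index to the first `k` variables. -/
def takePre {n : ℕ → ℕ} {k : ℕ} (x : PreIdx n (k + 1)) : PreIdx n k :=
  fun i => x ⟨i, Nat.lt_succ_of_lt i.isLt⟩

/-- Extend a prefix index by one more variable. -/
def snoc' {n : ℕ → ℕ} {k : ℕ} (z : PreIdx n k) (a : Fin (n k)) : PreIdx n (k + 1) :=
  fun i =>
    if h : (i : ℕ) < k then z ⟨i, h⟩
    else Fin.cast (congrArg n (by have := i.isLt; omega : k = (i : ℕ))) a

/-- A family of tensor-train cores: core `k` has shape `r k × n k × r (k+1)`.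
(The first and last cores carry a dummy index of size `r 0 = 1`, `r d = 1`.) -/
abbrev CoreType (n r : ℕ → ℕ) (d : ℕ) :=
  ∀ k : Fin d, Fin (r k) → Fin (n k) → Fin (r ((k : ℕ) + 1)) → ℝ

/-- Partial contraction of the first `k` cores. -/
noncomputable def ttPrefixF {d : ℕ} {n r : ℕ → ℕ} (G : CoreType n r d) :
    (k : ℕ) → k ≤ d → PreIdx n k → Fin (r 0) → Fin (r k) → ℝ
  | 0, _, _, a, b => if (a : ℕ) = (b : ℕ) then 1 else 0
  | k + 1, h, x, a, b =>
      ∑ c : Fin (r k),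
        ttPrefixF G k (Nat.le_of_succ_le h) (takePre x) a c * G ⟨k, h⟩ c (x (Fin.last k)) b

/-- Full contraction `G_1 ∘ ⋯ ∘ G_d` of a family of tensor-train cores. -/
noncomputable def ttContract {d : ℕ} {n r : ℕ → ℕ} (G : CoreType n r d)
    (x : PreIdx n d) : ℝ :=
  ∑ a : Fin (r 0), ∑ b : Fin (r d), ttPrefixF G d le_rfl x a b

/-- The recursively contracted left sketch functions `S_k` built from blocks `s_k`. -/
noncomputable def leftSketch {n m : ℕ → ℕ}
    (s : ∀ k : ℕ, Fin (m (k + 1)) → Fin (n k) → Fin (m k) → ℝ) :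
    (k : ℕ) → Fin (m k) → PreIdx n k → ℝ
  | 0, _, _ => 1
  | k + 1, β, x => ∑ c : Fin (m k), s k β (x (Fin.last k)) c * leftSketch s k c (takePre x)

/-- The right-sketched unfolding `Φ̄_k = p ∘ T_{k+1}`. -/
noncomputable def rightSketched {n : ℕ → ℕ} {d : ℕ} (p : PreIdx n d → ℝ)
    {ℓ : ℕ → ℕ} (T : ∀ k : ℕ, SufIdx n d k → Fin (ℓ k) → ℝ) (k : ℕ)
    (x : PreIdx n k) (γ : Fin (ℓ k)) : ℝ :=
  ∑ y : SufIdx n d k, p (glue x y) * T k y γ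

/-- The doubly sketched tensor `Φ̃_{j+1} = S_j ∘ Φ̄_{j+1}`. -/
noncomputable def tildePhi {n : ℕ → ℕ} {d : ℕ} {ℓ m : ℕ → ℕ} (p : PreIdx n d → ℝ)
    (T : ∀ k : ℕ, SufIdx n d k → Fin (ℓ k) → ℝ)
    (s : ∀ k : ℕ, Fin (m (k + 1)) → Fin (n k) → Fin (m k) → ℝ)
    (j : ℕ) (β : Fin (m j)) (xj : Fin (n j)) (γ : Fin (ℓ (j + 1))) : ℝ :=
  ∑ z : PreIdx n j, leftSketch s j β z * rightSketched p T (j + 1) (snoc' z xj) γ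

/-- Marginal of `p` on the window of variables `[a, b)`. -/
noncomputable def winMarg {n : ℕ → ℕ} {d : ℕ} (p : PreIdx n d → ℝ) (a b : ℕ)
    (y : MidIdx n d a b) : ℝ :=
  ∑ z : ∀ i : {i : Fin d // (i : ℕ) < a ∨ b ≤ (i : ℕ)}, Fin (n i),
    p fun i =>
      if h : a ≤ (i : ℕ) ∧ (i : ℕ) < b then y ⟨i, h⟩ else z ⟨i, by omega⟩

/-- Marginal of `p` on the window `[a, b)`, viewed as a matrix with rows indexed by
variables in `[a, c)` and columns by variables in `[c, b)`. -/
noncomputable def winMatrix {n : ℕ → ℕ} {d : ℕ} (p : PreIdx n d → ℝ) (a c b : ℕ) :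
    Matrix (MidIdx n d a c) (MidIdx n d c b) ℝ :=
  Matrix.of fun x y =>
    ∑ z : ∀ i : {i : Fin d // (i : ℕ) < a ∨ b ≤ (i : ℕ)}, Fin (n i),
      p fun i =>
        if h1 : a ≤ (i : ℕ) ∧ (i : ℕ) < c then x ⟨i, h1⟩
        else if h2 : c ≤ (i : ℕ) ∧ (i : ℕ) < b then y ⟨i, h2⟩
        else z ⟨i, by omega⟩

/-- A (first-order) discrete Markov model: a probability density such that for all
`2 ≤ k ≤ d - 1` (1-based), `p(x) · p_k(x_k) = p_{1:k}(x_{1:k}) · p_{k:d}(x_{k:d})`. -/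
def IsMarkov {n : ℕ → ℕ} {d : ℕ} (p : PreIdx n d → ℝ) : Prop :=
  (∀ x, 0 ≤ p x) ∧ (∑ x : PreIdx n d, p x) = 1 ∧
    ∀ k : ℕ, 2 ≤ k → k ≤ d - 1 → ∀ x : PreIdx n d,
      p x * winMarg p (k - 1) k (fun i => x i.1) =
        winMarg p 0 k (fun i => x i.1) * winMarg p (k - 1) d (fun i => x i.1)

/-- An order-`m` discrete Markov model. -/
def IsMarkovOrder {n : ℕ → ℕ} {d : ℕ} (m : ℕ) (p : PreIdx n d → ℝ) : Prop :=
  (∀ x, 0 ≤ p x) ∧ (∑ x : PreIdx n d, p x) = 1 ∧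
    ∀ k : ℕ, m + 1 ≤ k → k ≤ d - 1 → ∀ x : PreIdx n d,
      p x * winMarg p (k - m) k (fun i => x i.1) =
        winMarg p 0 k (fun i => x i.1) * winMarg p (k - m) d (fun i => x i.1)

/-- Spectral norm (ℓ² → ℓ² operator norm) of a matrix. -/
noncomputable def specNorm {R C : Type*} [Fintype R] [Fintype C] [DecidableEq C]
    (M : Matrix R C ℝ) : ℝ :=
  ‖LinearMap.toContinuousLinearMap (Matrix.toEuclideanLin M)‖

/-- Moore–Penrose pseudoinverse of a full-column-rank matrix, `A⁺ = (AᵀA)⁻¹Aᵀ`. -/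
noncomputable def pinv {m n : ℕ} (A : Matrix (Fin m) (Fin n) ℝ) :
    Matrix (Fin n) (Fin m) ℝ :=
  (Aᵀ * A)⁻¹ * Aᵀ

/-- The norm `|||G|||`: max over the middle index of the spectral norm of the slices. -/
noncomputable def tnorm {a b c : ℕ} (G : Fin a → Fin b → Fin c → ℝ) : ℝ :=
  ⨆ i : Fin b, specNorm (Matrix.of fun x y => G x i y)

/-- Supremum norm of a 3-tensor. -/
noncomputable def supNorm3 {a b c : ℕ} (G : Fin a → Fin b → Fin c → ℝ) : ℝ :=
  ⨆ q : Fin a × Fin b × Fin c, |G q.1 q.2.1 q.2.2|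

/-- Supremum norm of a `d`-dimensional tensor. -/
noncomputable def supNormF {n : ℕ → ℕ} {d : ℕ} (f : PreIdx n d → ℝ) : ℝ :=
  ⨆ x : PreIdx n d, |f x|

/-- The reduced equations of TT-RS for a Markov model with identity sketches
(here `d = d₀ + 3`): `G_1 = B_1`; `Σ_{α_{k-1}} A_{k-1}(x_{k-1}, α_{k-1})
G_k(α_{k-1}, x_k, α_k) = B_k(x_{k-1}, x_k, α_k)` for `k = 2, …, d-1` with `A_1 = B_1`
and `A_k(x_k, α_k) = Σ_{x_{k-1}} B_k(x_{k-1}, x_k, α_k)`; and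
`Σ_{α_{d-1}} A_{d-1}(x_{d-1}, α_{d-1}) G_d(α_{d-1}, x_d) = p(x_{d-1}, x_d)`.
(0-based: `Bmid t` is the paper's `B_{t+2}`.) -/
def MarkovCDE (d₀ : ℕ) (n r : ℕ → ℕ) (p : PreIdx n (d₀ + 3) → ℝ)
    (B1 : Fin (n 0) → Fin (r 1) → ℝ)
    (Bmid : ∀ t : ℕ, Fin (n t) → Fin (n (t + 1)) → Fin (r (t + 2)) → ℝ)
    (G : CoreType n r (d₀ + 3)) : Prop :=
  (∀ (a : Fin (r 0)) (x : Fin (n 0)) (α : Fin (r 1)),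
      G ⟨0, by omega⟩ a x α = B1 x α) ∧
  (∀ (y : Fin (n 0)) (x : Fin (n 1)) (α : Fin (r 2)),
      (∑ c : Fin (r 1), B1 y c * G ⟨1, by omega⟩ c x α) = Bmid 0 y x α) ∧
  (∀ t : ℕ, ∀ _ht : t + 1 ≤ d₀,
      ∀ (y : Fin (n (t + 1))) (x : Fin (n (t + 2))) (α : Fin (r (t + 3))),
      (∑ c : Fin (r (t + 2)),
          (∑ w : Fin (n t), Bmid t w y c) * G ⟨t + 2, by omega⟩ c x α) =
        Bmid (t + 1) y x α) ∧
  (∀ (q : MidIdx n (d₀ + 3) (d₀ + 1) (d₀ + 3)) (b : Fin (r (d₀ + 3))),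
      (∑ c : Fin (r (d₀ + 2)),
          (∑ w : Fin (n d₀),
            Bmid d₀ w
              (q ⟨⟨d₀ + 1, by omega⟩, ⟨le_rfl, Nat.lt_succ_of_lt (Nat.lt_succ_self _)⟩⟩) c) *
            G ⟨d₀ + 2, by omega⟩ c
              (q ⟨⟨d₀ + 2, by omega⟩, ⟨Nat.le_succ _, Nat.lt_succ_self _⟩⟩) b) =
        winMarg p (d₀ + 1) (d₀ + 3) q)

/-!
The Markov property says `p(x_{k-1}, x_k; x_{k+1}) = p(x_{k-1} | x_k) p(x_k; x_{k+1})`. This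
relation is linear in the columns of the two matrices, so it passes to the columns of `B_k`:
`B_k(x_{k-1}, x_k, α) = p(x_{k-1} | x_k) A_k(x_k, α)`. The equation for `G_k` then reads
`A_{k-1} G_k = p(x_{k-1} | x_k) A_k`, and these equations telescope to
`G_1 ⋯ G_k = p(x_1, …, x_{k-1} | x_k) A_k`, which is `p` for `k = d`. A solution exists because the
columns of `A_{k-1}` span those of `p(x_{k-1}; x_k)`. It is unique because the unfolding matrix of
rank `r_{k-1}` factors through `A_{k-1}`, which is therefore injective.
-/

section Marginal

variable {ι R : Type*} [Fintype ι] [DecidableEq ι] {β : ι → Type*}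
  [∀ i, Fintype (β i)] [∀ i, DecidableEq (β i)]

/-- The marginal of `p` on the coordinates in `S`. It is kept as a function of the full index
(depending only on `S`), so that marginals on different sets multiply without coercions. -/
def marginal [AddCommMonoid R] (p : (∀ i, β i) → R) (S : Finset ι) (x : ∀ i, β i) : R :=
  ∑ z with ∀ i ∈ S, z i = x i, p z

section AddCommMonoid

variable [AddCommMonoid R] (p : (∀ i, β i) → R)

lemma dependsOn_marginal (S : Finset ι) : DependsOn (marginal p S) S := by
  intro x y hxy
  refine Finset.sum_congr (Finset.filter_congr fun z _ =>
    forall₂_congr fun i hi => ?_) fun _ _ => rfl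
  rw [hxy i hi]

@[simp]
lemma marginal_univ : marginal p Finset.univ = p := by
  ext x
  simp [marginal, ← funext_iff, Finset.filter_eq']

lemma sum_marginal_update {S : Finset ι} {i : ι} (hi : i ∈ S) (x : ∀ i, β i) :
    ∑ w, marginal p S (Function.update x i w) = marginal p (S.erase i) x := by
  rw [marginal, ← Finset.sum_fiberwise _ fun z : ∀ j, β j => z i]
  refine Finset.sum_congr rfl fun w _ => Finset.sum_congr ?_ fun _ _ => rfl
  ext z
  simp only [Finset.mem_filter, Finset.mem_univ, true_and, Finset.mem_erase]
  constructor
  · intro h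
    refine ⟨fun j hj => ?_, by simpa using h i hi⟩
    rw [h j hj.2, Function.update_of_ne hj.1]
  · rintro ⟨h, rfl⟩ j hj
    obtain rfl | hji := eq_or_ne j i
    · simp
    · rw [h j ⟨hji, hj⟩, Function.update_of_ne hji]

variable {p} in
lemma marginal_eq_zero_of_subset [PartialOrder R] [IsOrderedAddMonoid R] (hp : ∀ x, 0 ≤ p x)
    {S T : Finset ι} (hST : S ⊆ T) {x : ∀ i, β i} (hS : marginal p S x = 0) :
    marginal p T x = 0 := by
  rw [marginal, Finset.sum_eq_zero_iff_of_nonneg fun z _ => hp z] at hS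
  refine Finset.sum_eq_zero fun z hz => hS z ?_
  simp only [Finset.mem_filter, Finset.mem_univ, true_and] at hz ⊢
  exact fun i hi => hz i (hST hi)

end AddCommMonoid

/-- Conditional independence, under the weight `p`, of the coordinates in `S` and those in `T`
given the coordinates in `S ∩ T`, written without division. -/
def IsCondIndep [CommSemiring R] (p : (∀ i, β i) → R) (S T : Finset ι) : Prop :=
  ∀ x, marginal p (S ∪ T) x * marginal p (S ∩ T) x = marginal p S x * marginal p T x

namespace IsCondIndep

section CommSemiring

variable [CommSemiring R] {p : (∀ i, β i) → R} {S T : Finset ι}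

lemma of_subset (h : S ⊆ T) : IsCondIndep p S T := fun x => by
  rw [Finset.union_eq_right.2 h, Finset.inter_eq_left.2 h, mul_comm]

lemma symm (h : IsCondIndep p S T) : IsCondIndep p T S := fun x => by
  rw [Finset.union_comm, Finset.inter_comm, h x, mul_comm]

lemma erase_left (h : IsCondIndep p S T) {i : ι} (hi : i ∉ T) : IsCondIndep p (S.erase i) T := by
  by_cases hiS : i ∈ S
  swap
  · rwa [Finset.erase_eq_of_notMem hiS]
  intro x
  have marginal_update {U : Finset ι} (hU : i ∉ U) (w : β i) :
      marginal p U (Function.update x i w) = marginal p U x :=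
    dependsOn_marginal p U fun j hj => Function.update_of_ne (ne_of_mem_of_not_mem hj hU) _ _
  have hunion : S.erase i ∪ T = (S ∪ T).erase i := by
    rw [Finset.erase_union_distrib, Finset.erase_eq_of_notMem hi]
  have hinter : S.erase i ∩ T = S ∩ T := by
    rw [Finset.erase_inter, Finset.erase_eq_of_notMem (by simp [hi])]
  rw [hunion, hinter, ← sum_marginal_update p (Finset.mem_union_left T hiS),
    ← sum_marginal_update p hiS, Finset.sum_mul, Finset.sum_mul]
  refine Finset.sum_congr rfl fun w _ => ?_
  rw [← marginal_update hi w, ← h, marginal_update (U := S ∩ T) (by simp [hi])]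

lemma mono_left (h : IsCondIndep p S T) {S' : Finset ι} (hS' : S' ⊆ S) (hST : S ∩ T ⊆ S') :
    IsCondIndep p S' T := by
  have sdiff_left (D : Finset ι) (hD : Disjoint D T) : IsCondIndep p (S \ D) T := by
    induction D using Finset.induction_on with
    | empty => simpa using h
    | insert i D _ ih =>
      rw [Finset.disjoint_insert_left] at hD
      rw [Finset.sdiff_insert]
      exact (ih hD.2).erase_left hD.1
  rw [← Finset.sdiff_sdiff_eq_self hS']
  refine sdiff_left _ (Finset.disjoint_left.2 fun i hi hiT => ?_)
  rw [Finset.mem_sdiff] at hi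
  exact hi.2 (hST (Finset.mem_inter.2 ⟨hi.1, hiT⟩))

lemma mono (h : IsCondIndep p S T) {S' T' : Finset ι} (hS' : S' ⊆ S) (hT' : T' ⊆ T)
    (hST : S ∩ T ⊆ S' ∩ T') : IsCondIndep p S' T' := by
  rw [Finset.subset_inter_iff] at hST
  refine ((h.mono_left hS' hST.1).symm.mono_left hT' fun i hi => hST.2 ?_).symm
  rw [Finset.inter_comm] at hi
  exact Finset.inter_subset_inter_right hS' hi

end CommSemiring

lemma marginal_union [Semifield R] [PartialOrder R] [IsOrderedAddMonoid R]
    {p : (∀ i, β i) → R} (hp : ∀ x, 0 ≤ p x) {S T : Finset ι} (h : IsCondIndep p S T)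
    (x : ∀ i, β i) :
    marginal p (S ∪ T) x = marginal p S x / marginal p (S ∩ T) x * marginal p T x := by
  obtain h0 | h0 := eq_or_ne (marginal p (S ∩ T) x) 0
  · rw [h0, div_zero, zero_mul]
    exact marginal_eq_zero_of_subset hp Finset.inter_subset_union h0
  · rw [div_mul_eq_mul_div, eq_div_iff h0, h x]

end IsCondIndep

end Marginal

section Window

variable {n : ℕ → ℕ} {d : ℕ}

/-- The positions `i` with `a ≤ i < b`, as in `MidIdx`. -/
def window (d a b : ℕ) : Finset (Fin d) := {i | a ≤ (i : ℕ) ∧ (i : ℕ) < b}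

@[simp]
lemma mem_window {a b : ℕ} {i : Fin d} : i ∈ window d a b ↔ a ≤ (i : ℕ) ∧ (i : ℕ) < b := by
  simp [window]

lemma window_zero_self : window d 0 d = Finset.univ := by
  ext i
  simp

lemma window_union {a j c b : ℕ} (haj : a ≤ j) (hjc : j ≤ c) (hcb : c ≤ b) :
    window d a c ∪ window d j b = window d a b := by
  ext i
  simp only [Finset.mem_union, mem_window]
  omega

lemma window_inter {a j c b : ℕ} (haj : a ≤ j) (hcb : c ≤ b) :
    window d a c ∩ window d j b = window d j c := by
  ext i
  simp only [Finset.mem_inter, mem_window]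
  omega

/-- The marginal of `p` on the window `[a, b)`; unlike `winMarg`, a function of the full index. -/
noncomputable abbrev windowMarginal (p : PreIdx n d → ℝ) (a b : ℕ) (x : PreIdx n d) : ℝ :=
  marginal p (window d a b) x

lemma windowMarginal_congr (p : PreIdx n d → ℝ) {a b : ℕ} {x y : PreIdx n d}
    (h : ∀ i : Fin d, a ≤ (i : ℕ) → (i : ℕ) < b → x i = y i) :
    windowMarginal p a b x = windowMarginal p a b y :=
  dependsOn_marginal p _ fun i hi => by
    rw [Finset.mem_coe, mem_window] at hi
    exact h i hi.1 hi.2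

lemma windowMarginal_update (p : PreIdx n d → ℝ) {a b : ℕ} (x : PreIdx n d) {k : ℕ} {hk : k < d}
    (v : Fin (n k)) (h : k < a ∨ b ≤ k) :
    windowMarginal p a b (Function.update x ⟨k, hk⟩ v) = windowMarginal p a b x :=
  windowMarginal_congr p fun i ha hb =>
    Function.update_of_ne (Fin.ne_of_val_ne (by simp only; omega)) _ _

lemma sum_windowMarginal_update (p : PreIdx n d → ℝ) {a b : ℕ} (hab : a < b) (ha : a < d)
    (x : PreIdx n d) :
    ∑ w : Fin (n a), windowMarginal p a b (Function.update x ⟨a, ha⟩ w) =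
      windowMarginal p (a + 1) b x := by
  have herase : (window d a b).erase ⟨a, ha⟩ = window d (a + 1) b := by
    ext i
    simp only [Finset.mem_erase, mem_window, ne_eq, Fin.ext_iff]
    omega
  simpa only [herase] using
    sum_marginal_update p (mem_window.2 ⟨le_rfl, hab⟩ : (⟨a, ha⟩ : Fin d) ∈ window d a b) x

lemma winMarg_restrict (p : PreIdx n d → ℝ) (a b : ℕ) (x : PreIdx n d) :
    winMarg p a b (fun i => x i.1) = windowMarginal p a b x := by
  refine Finset.sum_bij' (fun z _ i =>
      if h : a ≤ (i : ℕ) ∧ (i : ℕ) < b then x i else z ⟨i, by omega⟩)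
    (fun z _ i => z i.1) ?_ (fun _ _ => Finset.mem_univ _) ?_ ?_ (fun _ _ => rfl)
  · intro z _
    simp +contextual
  · intro z _
    funext i
    exact dif_neg (by have := i.2; omega)
  · intro z hz
    simp only [Finset.mem_filter, Finset.mem_univ, true_and, mem_window] at hz
    funext i
    dsimp only
    split_ifs with h
    · exact (hz i h).symm
    · rfl

lemma winMatrix_restrict (p : PreIdx n d → ℝ) {a c b : ℕ} (hac : a ≤ c) (hcb : c ≤ b)
    (x : PreIdx n d) :
    winMatrix p a c b (fun i => x i.1) (fun i => x i.1) = windowMarginal p a b x := by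
  rw [← winMarg_restrict, winMatrix, Matrix.of_apply, winMarg]
  refine Finset.sum_congr rfl fun z _ => congrArg p (funext fun i => ?_)
  split_ifs <;> first | rfl | omega

lemma IsMarkov.nonempty {p : PreIdx n d → ℝ} (hp : IsMarkov p) : Nonempty (PreIdx n d) := by
  by_contra hempty
  rw [not_nonempty_iff] at hempty
  simpa using hp.2.1

lemma IsMarkov.isCondIndep_window {p : PreIdx n d → ℝ} (hp : IsMarkov p) {j : ℕ} (hj : j < d) :
    IsCondIndep p (window d 0 (j + 1)) (window d j d) := by
  obtain rfl | hj0 := Nat.eq_zero_or_pos j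
  · exact .of_subset fun i _ => by simp
  obtain hjd | hjd : j + 1 = d ∨ j + 1 < d := by omega
  · exact (IsCondIndep.of_subset fun i _ => by simp [hjd]).symm
  intro x
  have hmarkov := hp.2.2 (j + 1) (by omega) (by omega) x
  simp only [winMarg_restrict, Nat.add_sub_cancel] at hmarkov
  rwa [window_union (by omega) (by omega) (by omega), window_inter (by omega) (by omega),
    window_zero_self, marginal_univ]

lemma IsMarkov.windowMarginal_eq {p : PreIdx n d → ℝ} (hp : IsMarkov p) {a j b : ℕ}
    (haj : a ≤ j) (hjb : j < b) (hbd : b ≤ d) (x : PreIdx n d) :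
    windowMarginal p a b x =
      windowMarginal p a (j + 1) x / windowMarginal p j (j + 1) x * windowMarginal p j b x := by
  have hindep : IsCondIndep p (window d a (j + 1)) (window d j b) := by
    refine (hp.isCondIndep_window (hjb.trans_le hbd)).mono ?_ ?_ ?_ <;> intro i <;>
      simp only [Finset.mem_inter, mem_window] <;> omega
  simpa only [window_union haj j.le_succ hjb, window_inter haj hjb] using
    hindep.marginal_union hp.1 x

end Window

section LinearAlgebra

lemma colSpace_mul_le {R K C : Type*} [Fintype K] (L : Matrix R K ℝ) (N : Matrix K C ℝ) :
    colSpace (L * N) ≤ colSpace L := by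
  refine Submodule.span_le.2 ?_
  rintro _ ⟨c, rfl⟩
  refine (Submodule.mem_span_range_iff_exists_fun ℝ).2 ⟨fun k => N k c, ?_⟩
  ext i
  simp [Matrix.mul_apply, mul_comm]

lemma mulVec_injective_of_card_le_mrank_mul {R K C : Type*} [Fintype K] {L : Matrix R K ℝ}
    {N : Matrix K C ℝ} (h : Fintype.card K ≤ mrank (L * N)) : Function.Injective L.mulVec := by
  have : FiniteDimensional ℝ (Submodule.span ℝ (Set.range L.col)) :=
    .span_of_finite ℝ (Set.finite_range _)
  rw [Matrix.mulVec_injective_iff, linearIndependent_iff_card_le_finrank_span]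
  exact h.trans (Submodule.finrank_mono (colSpace_mul_le L N))

end LinearAlgebra

section SumPrev

variable {n : ℕ → ℕ} {d : ℕ}

/-- The operator `f ↦ ∑_{x_{k-1}} f`, which the paper uses to pass from `B_k` to `A_k`; for `k = 0`
there is nothing to sum over. -/
noncomputable def sumPrev : (k : ℕ) → k < d → (PreIdx n d → ℝ) →ₗ[ℝ] (PreIdx n d → ℝ)
  | 0, _ => LinearMap.id
  | k + 1, h => ∑ w : Fin (n k),
      LinearMap.funLeft ℝ ℝ fun x => Function.update x ⟨k, Nat.lt_of_succ_lt h⟩ w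

lemma sumPrev_succ_apply {k : ℕ} (h : k + 1 < d) (f : PreIdx n d → ℝ) (x : PreIdx n d) :
    sumPrev (k + 1) h f x =
      ∑ w : Fin (n k), f (Function.update x ⟨k, Nat.lt_of_succ_lt h⟩ w) := by
  simp [sumPrev, LinearMap.funLeft_apply]

lemma sumPrev_windowMarginal (p : PreIdx n d → ℝ) {k b : ℕ} (hk : k < d) (hkb : k < b) :
    sumPrev k hk (windowMarginal p (k - 1) b) = windowMarginal p k b := by
  cases k with
  | zero => rfl
  | succ k =>
    ext x
    rw [sumPrev_succ_apply]
    exact sum_windowMarginal_update p (Nat.lt_of_succ_lt hkb) (Nat.lt_of_succ_lt hk) x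

lemma sumPrev_comp_update {k j : ℕ} (hk : k < d) (hj : j < d) (hkj : k ≤ j) (v : Fin (n j))
    (f : PreIdx n d → ℝ) :
    sumPrev k hk (fun x => f (Function.update x ⟨j, hj⟩ v)) =
      fun x => sumPrev k hk f (Function.update x ⟨j, hj⟩ v) := by
  cases k with
  | zero => rfl
  | succ k =>
    ext x
    simp only [sumPrev_succ_apply]
    refine Finset.sum_congr rfl fun w _ => ?_
    rw [Function.update_comm (Fin.ne_of_val_ne (by simp only; omega))]

end SumPrev

section MarkovSketch

variable {n r : ℕ → ℕ} {d : ℕ} {p : PreIdx n d → ℝ}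
  {B : ∀ k, k < d → PreIdx n d → Fin (r (k + 1)) → ℝ} {G : CoreType n r d}

/-- The tensors `B_0, …, B_{d-1}` of the reduced equations for `p`, as functions of the full index:
the columns `B_k(·, ·, α)` of a non-final one span those of `p((x_{k-1}, x_k); x_{k+1})`, and the
final one is the marginal `p(x_{d-2}, x_{d-1})`. Truncated subtraction turns the window
`[k - 1, k + 2)` into `[0, 2)` for `k = 0`. -/
structure IsMarkovSketch (p : PreIdx n d → ℝ)
    (B : ∀ k, k < d → PreIdx n d → Fin (r (k + 1)) → ℝ) : Prop where
  span_eq (k : ℕ) (hk : k + 1 < d) :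
    Submodule.span ℝ (Set.range fun α x => B k (Nat.lt_of_succ_lt hk) x α) =
      Submodule.span ℝ (Set.range fun v x =>
        windowMarginal p (k - 1) (k + 2) (Function.update x ⟨k + 1, hk⟩ v))
  eq_windowMarginal (k : ℕ) (hk : k < d) (hkd : k + 1 = d) (x : PreIdx n d) (α : Fin (r (k + 1))) :
    B k hk x α = windowMarginal p (k - 1) d x

/-- The tensors `A_k = ∑_{x_{k-1}} B_k` of the reduced equations. -/
noncomputable def contractedSketch (B : ∀ k, k < d → PreIdx n d → Fin (r (k + 1)) → ℝ)
    (k : ℕ) (hk : k < d) (x : PreIdx n d) (α : Fin (r (k + 1))) : ℝ :=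
  sumPrev k hk (fun y => B k hk y α) x

/-- The reduced equations `G_0 = B_0` and `∑_c A_{k-1}(x_{k-1}, c) G_k(c, x_k, α) =
B_k(x_{k-1}, x_k, α)`, the final one included. -/
def SolvesReduced (B : ∀ k, k < d → PreIdx n d → Fin (r (k + 1)) → ℝ) (G : CoreType n r d) : Prop :=
  (∀ (hd : 0 < d) (a : Fin (r 0)) (x : PreIdx n d) (α : Fin (r 1)),
    G ⟨0, hd⟩ a (x ⟨0, hd⟩) α = B 0 hd x α) ∧
  ∀ (k : ℕ) (hk : k + 1 < d) (x : PreIdx n d) (α : Fin (r (k + 2))),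
    ∑ c, contractedSketch B k (Nat.lt_of_succ_lt hk) x c * G ⟨k + 1, hk⟩ c (x ⟨k + 1, hk⟩) α =
      B (k + 1) hk x α

lemma windowMarginal_eq_mul_sumPrev (hp : IsMarkov p) {k b : ℕ} (hkb : k < b) (hbd : b ≤ d)
    (x : PreIdx n d) :
    windowMarginal p (k - 1) b x = windowMarginal p (k - 1) (k + 1) x /
      windowMarginal p k (k + 1) x *
        sumPrev k (hkb.trans_le hbd) (windowMarginal p (k - 1) b) x := by
  rw [sumPrev_windowMarginal p _ hkb, ← hp.windowMarginal_eq (Nat.sub_le k 1) hkb hbd]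

namespace IsMarkovSketch

lemma contractedSketch_last (hB : IsMarkovSketch p B) {k : ℕ} (hk : k < d) (hkd : k + 1 = d)
    (x : PreIdx n d) (α : Fin (r (k + 1))) :
    contractedSketch B k hk x α = windowMarginal p k d x := by
  simp only [contractedSketch, hB.eq_windowMarginal k hk hkd]
  exact congrFun (sumPrev_windowMarginal p hk hk) x

lemma span_contractedSketch (hB : IsMarkovSketch p B) {k : ℕ} (hk : k + 1 < d) :
    Submodule.span ℝ (Set.range fun α x => contractedSketch B k (Nat.lt_of_succ_lt hk) x α) =
      Submodule.span ℝ (Set.range fun v x =>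
        windowMarginal p k (k + 2) (Function.update x ⟨k + 1, hk⟩ v)) := by
  have hk' := Nat.lt_of_succ_lt hk
  have hmap := congrArg (Submodule.map (sumPrev k hk')) (hB.span_eq k hk)
  rw [Submodule.map_span, Submodule.map_span, ← Set.range_comp, ← Set.range_comp] at hmap
  have hcol : (sumPrev k hk' ∘ fun v x =>
      windowMarginal p (k - 1) (k + 2) (Function.update x ⟨k + 1, hk⟩ v)) =
        fun v x => windowMarginal p k (k + 2) (Function.update x ⟨k + 1, hk⟩ v) := by
    funext v
    rw [Function.comp_apply, sumPrev_comp_update hk' hk (Nat.le_succ k),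
      sumPrev_windowMarginal p hk' (by omega)]
  rwa [hcol] at hmap

-- Both sides are linear in the column `B_k(·, ·, α)`, so it is enough to check the columns of the
-- marginal matrix, for which this is the Markov property.
lemma eq_mul_contractedSketch (hp : IsMarkov p) (hB : IsMarkovSketch p B) {k : ℕ} (hk : k < d)
    (x : PreIdx n d) (α : Fin (r (k + 1))) :
    B k hk x α = windowMarginal p (k - 1) (k + 1) x / windowMarginal p k (k + 1) x *
      contractedSketch B k hk x α := by
  obtain hkd | hkd : k + 1 = d ∨ k + 1 < d := by omega
  · simp only [contractedSketch, hB.eq_windowMarginal k hk hkd]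
    exact windowMarginal_eq_mul_sumPrev hp hk le_rfl x
  let condSum : (PreIdx n d → ℝ) →ₗ[ℝ] ℝ :=
    (windowMarginal p (k - 1) (k + 1) x / windowMarginal p k (k + 1) x) •
      LinearMap.proj x ∘ₗ sumPrev k hk
  have hspan : Submodule.span ℝ (Set.range fun α x => B k hk x α) ≤
      LinearMap.eqLocus (LinearMap.proj x) condSum := by
    rw [hB.span_eq k hkd, Submodule.span_le]
    rintro _ ⟨v, rfl⟩
    have hmarkov := windowMarginal_eq_mul_sumPrev hp (by omega : k < k + 2) hkd
      (Function.update x ⟨k + 1, hkd⟩ v)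
    rw [windowMarginal_update p x v (.inr le_rfl), windowMarginal_update p x v (.inr le_rfl)]
      at hmarkov
    simpa [condSum, sumPrev_comp_update hk hkd (Nat.le_succ k)] using hmarkov
  exact hspan (Submodule.subset_span ⟨α, rfl⟩)

lemma contractedSketch_congr (hB : IsMarkovSketch p B) {k : ℕ} {hk : k < d} {x y : PreIdx n d}
    (hxy : x ⟨k, hk⟩ = y ⟨k, hk⟩) (α : Fin (r (k + 1))) :
    contractedSketch B k hk x α = contractedSketch B k hk y α := by
  obtain hkd | hkd : k + 1 = d ∨ k + 1 < d := by omega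
  · rw [hB.contractedSketch_last hk hkd, hB.contractedSketch_last hk hkd]
    refine windowMarginal_congr p fun i hi _ => ?_
    obtain rfl : i = ⟨k, hk⟩ := Fin.ext (by have := i.2; simp only; omega)
    exact hxy
  have hspan : Submodule.span ℝ (Set.range fun α x => contractedSketch B k hk x α) ≤
      LinearMap.eqLocus (LinearMap.proj x) (LinearMap.proj y) := by
    rw [hB.span_contractedSketch hkd, Submodule.span_le]
    rintro _ ⟨v, rfl⟩
    refine windowMarginal_congr p fun i hi hi' => ?_
    obtain rfl | rfl : i = ⟨k, hk⟩ ∨ i = ⟨k + 1, hkd⟩ := by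
      simp only [Fin.ext_iff]
      omega
    · rwa [Function.update_of_ne (by simp), Function.update_of_ne (by simp)]
    · rw [Function.update_self, Function.update_self]
  exact hspan (Submodule.subset_span ⟨α, rfl⟩)

lemma exists_transition (hB : IsMarkovSketch p B) {k : ℕ} (hk : k + 1 < d) :
    ∃ Q : Fin (r (k + 1)) → Fin (n (k + 1)) → ℝ, ∀ x,
      ∑ α, contractedSketch B k (Nat.lt_of_succ_lt hk) x α * Q α (x ⟨k + 1, hk⟩) =
        windowMarginal p k (k + 2) x := by
  have hmem (v : Fin (n (k + 1))) : ∃ c : Fin (r (k + 1)) → ℝ,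
      ∑ α, c α • (fun x => contractedSketch B k (Nat.lt_of_succ_lt hk) x α) =
        fun x => windowMarginal p k (k + 2) (Function.update x ⟨k + 1, hk⟩ v) := by
    rw [← Submodule.mem_span_range_iff_exists_fun, hB.span_contractedSketch hk]
    exact Submodule.subset_span ⟨v, rfl⟩
  choose Q hQ using hmem
  refine ⟨fun α v => Q v α, fun x => ?_⟩
  have hx := congrFun (hQ (x ⟨k + 1, hk⟩)) x
  rw [Function.update_eq_self] at hx
  simpa [mul_comm] using hx

lemma exists_eq_sum_contractedSketch_mul (hp : IsMarkov p) (hB : IsMarkovSketch p B) {k : ℕ}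
    (hk : k + 1 < d) :
    ∃ Q : Fin (r (k + 1)) → Fin (n (k + 1)) → ℝ, ∀ x,
      p x = ∑ α, windowMarginal p 0 (k + 1) x / windowMarginal p k (k + 1) x *
        contractedSketch B k (Nat.lt_of_succ_lt hk) x α *
          (Q α (x ⟨k + 1, hk⟩) *
            (windowMarginal p (k + 1) d x / windowMarginal p (k + 1) (k + 2) x)) := by
  obtain ⟨Q, hQ⟩ := hB.exists_transition hk
  refine ⟨Q, fun x => ?_⟩
  calc
    p x = windowMarginal p 0 d x := by rw [windowMarginal, window_zero_self, marginal_univ]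
    _ = windowMarginal p 0 (k + 1) x / windowMarginal p k (k + 1) x *
          ((∑ α, contractedSketch B k (Nat.lt_of_succ_lt hk) x α * Q α (x ⟨k + 1, hk⟩)) /
            windowMarginal p (k + 1) (k + 2) x * windowMarginal p (k + 1) d x) := by
      rw [hQ, ← hp.windowMarginal_eq (Nat.le_succ k) hk le_rfl,
        ← hp.windowMarginal_eq (Nat.zero_le k) (Nat.lt_of_succ_lt hk) le_rfl]
    _ = _ := by
      rw [Finset.sum_div, Finset.sum_mul, Finset.mul_sum]
      refine Finset.sum_congr rfl fun α _ => ?_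
      ring

lemma exists_unfold_eq_mul (hp : IsMarkov p) (hB : IsMarkovSketch p B) {k : ℕ} (hk : k + 1 < d)
    (x₀ : PreIdx n d) :
    ∃ N : Matrix (Fin (r (k + 1))) (SufIdx n d (k + 1)) ℝ,
      unfold p (k + 1) = (Matrix.of fun u α =>
        windowMarginal p 0 (k + 1) (glue u fun i => x₀ i.1) /
          windowMarginal p k (k + 1) (glue u fun i => x₀ i.1) *
            contractedSketch B k (Nat.lt_of_succ_lt hk) (glue u fun i => x₀ i.1) α) * N := by
  obtain ⟨Q, hQ⟩ := hB.exists_eq_sum_contractedSketch_mul hp hk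
  let u₀ : PreIdx n (k + 1) := fun i => x₀ ⟨i, i.2.trans hk⟩
  refine ⟨.of fun α y => Q α (y ⟨⟨k + 1, hk⟩, le_rfl⟩) *
    (windowMarginal p (k + 1) d (glue u₀ y) / windowMarginal p (k + 1) (k + 2) (glue u₀ y)), ?_⟩
  ext u y
  have hhead (a : ℕ) : windowMarginal p a (k + 1) (glue u fun i => x₀ i.1) =
      windowMarginal p a (k + 1) (glue u y) :=
    windowMarginal_congr p fun i _ hi => by simp [glue, hi]
  have htail (b : ℕ) : windowMarginal p (k + 1) b (glue u₀ y) =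
      windowMarginal p (k + 1) b (glue u y) :=
    windowMarginal_congr p fun i hi _ => by simp [glue, hi.not_gt]
  have hA (α : Fin (r (k + 1))) :
      contractedSketch B k (Nat.lt_of_succ_lt hk) (glue u fun i => x₀ i.1) α =
        contractedSketch B k (Nat.lt_of_succ_lt hk) (glue u y) α :=
    hB.contractedSketch_congr (by simp [glue]) α
  have hy : glue u y ⟨k + 1, hk⟩ = y ⟨⟨k + 1, hk⟩, le_rfl⟩ := by simp [glue]
  simp only [unfold, Matrix.mul_apply, Matrix.of_apply, hhead, htail, hA, hQ (glue u y), hy]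

lemma mulVec_contractedSketch_injective (hp : IsMarkov p) (hB : IsMarkovSketch p B) {k : ℕ}
    (hk : k + 1 < d) (hrank : r (k + 1) ≤ mrank (unfold p (k + 1))) :
    Function.Injective (Matrix.of (contractedSketch B k (Nat.lt_of_succ_lt hk))).mulVec := by
  obtain ⟨x₀⟩ := hp.nonempty
  obtain ⟨N, hN⟩ := hB.exists_unfold_eq_mul hp hk x₀
  rw [hN] at hrank
  refine fun v w hvw => mulVec_injective_of_card_le_mrank_mul (by simpa using hrank)
    (funext fun u => ?_)
  have hu := congrFun hvw (glue u fun i => x₀ i.1)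
  simp only [Matrix.mulVec, dotProduct, Matrix.of_apply, mul_assoc, ← Finset.mul_sum] at hu ⊢
  rw [hu]

lemma exists_solvesReduced (hp : IsMarkov p) (hB : IsMarkovSketch p B) :
    ∃ G : CoreType n r d, SolvesReduced B G := by
  obtain ⟨x₀⟩ := hp.nonempty
  choose Q hQ using fun k (hk : k + 1 < d) => hB.exists_transition hk
  let G : CoreType n r d
    | ⟨0, h⟩, _, v, α => B 0 h (Function.update x₀ ⟨0, h⟩ v) α
    | ⟨k + 1, h⟩, c, v, α => Q k h c v *
        (contractedSketch B (k + 1) h (Function.update x₀ ⟨k + 1, h⟩ v) α /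
          windowMarginal p (k + 1) (k + 2) (Function.update x₀ ⟨k + 1, h⟩ v))
  refine ⟨G, fun hd _ x α => ?_, fun k hk x α => ?_⟩
  · exact hB.contractedSketch_congr (Function.update_self ..) α
  have hA := hB.contractedSketch_congr (y := x) (Function.update_self ⟨k + 1, hk⟩ _ x₀) α
  have hW : windowMarginal p (k + 1) (k + 2) (Function.update x₀ ⟨k + 1, hk⟩ (x ⟨k + 1, hk⟩)) =
      windowMarginal p (k + 1) (k + 2) x := windowMarginal_congr p fun i hi hi' => by
    obtain rfl : i = ⟨k + 1, hk⟩ := Fin.ext (by simp only; omega)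
    exact Function.update_self ..
  simp only [G, hA, hW]
  rw [hB.eq_mul_contractedSketch hp hk, Nat.add_sub_cancel, ← hQ k hk x, Finset.sum_div,
    Finset.sum_mul]
  refine Finset.sum_congr rfl fun c _ => ?_
  ring

lemma existsUnique_solvesReduced (hp : IsMarkov p) (hB : IsMarkovSketch p B)
    (hrank : ∀ k, k + 1 < d → r (k + 1) ≤ mrank (unfold p (k + 1))) :
    ∃! G : CoreType n r d, SolvesReduced B G := by
  obtain ⟨x₀⟩ := hp.nonempty
  refine existsUnique_of_exists_of_unique (hB.exists_solvesReduced hp) fun G G' hG hG' => ?_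
  funext ⟨k, hk⟩ c v α
  cases k with
  | zero =>
    simpa using (hG.1 hk c (Function.update x₀ ⟨0, hk⟩ v) α).trans (hG'.1 hk c _ α).symm
  | succ k =>
    suffices h : (fun c => G ⟨k + 1, hk⟩ c v α) = fun c => G' ⟨k + 1, hk⟩ c v α from congrFun h c
    refine hB.mulVec_contractedSketch_injective hp hk (hrank k hk) (funext fun x => ?_)
    have hx := (hG.2 k hk (Function.update x ⟨k + 1, hk⟩ v) α).trans (hG'.2 k hk _ α).symm
    have hA (c : Fin (r (k + 1))) :
        contractedSketch B k (Nat.lt_of_succ_lt hk) (Function.update x ⟨k + 1, hk⟩ v) c =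
          contractedSketch B k (Nat.lt_of_succ_lt hk) x c :=
      hB.contractedSketch_congr (Function.update_of_ne (by simp) _ _) c
    simp only [Function.update_self, hA] at hx
    exact hx

lemma ttPrefixF_eq (hp : IsMarkov p) (hB : IsMarkovSketch p B) (hG : SolvesReduced B G) {k : ℕ}
    (hk : k < d) (x : PreIdx n d) (a : Fin (r 0)) (α : Fin (r (k + 1))) :
    ttPrefixF G (k + 1) hk (fun i => x ⟨i, i.2.trans_le hk⟩) a α =
      windowMarginal p 0 (k + 1) x / windowMarginal p k (k + 1) x *
        contractedSketch B k hk x α := by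
  induction k with
  | zero =>
    rw [← hB.eq_mul_contractedSketch hp hk, ← hG.1 hk a]
    simp [ttPrefixF, Fin.val_inj]
  | succ k ih =>
    rw [ttPrefixF]
    calc
      _ = ∑ c, windowMarginal p 0 (k + 1) x / windowMarginal p k (k + 1) x *
            contractedSketch B k (Nat.lt_of_succ_lt hk) x c *
              G ⟨k + 1, hk⟩ c (x ⟨k + 1, hk⟩) α :=
        Finset.sum_congr rfl fun c _ => congrArg (· * _) (ih (Nat.lt_of_succ_lt hk) c)
      _ = windowMarginal p 0 (k + 1) x / windowMarginal p k (k + 1) x * B (k + 1) hk x α := by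
        simp only [mul_assoc, ← Finset.mul_sum, hG.2 k hk x α]
      _ = _ := by
        rw [hB.eq_mul_contractedSketch hp hk, Nat.add_sub_cancel,
          hp.windowMarginal_eq (Nat.zero_le k) (by omega : k < k + 2) hk]
        ring

lemma eq_ttContract (hp : IsMarkov p) (hB : IsMarkovSketch p B) (hG : SolvesReduced B G)
    (hd : 0 < d) (hr0 : r 0 = 1) (hrd : r d = 1) (x : PreIdx n d) : p x = ttContract G x := by
  obtain ⟨k, rfl⟩ := Nat.exists_eq_add_one.2 hd
  have hprefix (a : Fin (r 0)) (b : Fin (r (k + 1))) :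
      ttPrefixF G (k + 1) le_rfl x a b = p x := by
    refine (hB.ttPrefixF_eq hp hG (Nat.lt_succ_self k) x a b).trans ?_
    rw [hB.contractedSketch_last _ rfl,
      ← hp.windowMarginal_eq (Nat.zero_le k) (Nat.lt_succ_self k) le_rfl, windowMarginal,
      window_zero_self, marginal_univ]
  simp [ttContract, hprefix, hr0, hrd]

end IsMarkovSketch

end MarkovSketch

section ReducedEquations

lemma map_funLeft_colSpace {R S C : Type*} (M : Matrix R C ℝ) (e : S → R) :
    (colSpace M).map (LinearMap.funLeft ℝ ℝ e) = colSpace (M.submatrix e id) := by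
  rw [colSpace, colSpace, Submodule.map_span, ← Set.range_comp]
  rfl

lemma colSpace_winMatrix_submatrix {n : ℕ → ℕ} {d : ℕ} [∀ i : Fin d, Nonempty (Fin (n i))]
    (p : PreIdx n d → ℝ) {a c : ℕ} (hac : a ≤ c) (hc : c < d) :
    colSpace ((winMatrix p a c (c + 1)).submatrix (fun (x : PreIdx n d) i => x i.1) id) =
      Submodule.span ℝ (Set.range fun v x =>
        windowMarginal p a (c + 1) (Function.update x ⟨c, hc⟩ v)) := by
  let lastCoord (y : MidIdx n d c (c + 1)) : Fin (n c) := y ⟨⟨c, hc⟩, le_rfl, Nat.lt_succ_self c⟩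
  have lastCoord_surjective : Function.Surjective lastCoord := Function.surjective_eval _
  rw [← lastCoord_surjective.range_comp, colSpace]
  refine congrArg (fun g => Submodule.span ℝ (Set.range g)) (funext₂ fun y x => ?_)
  rw [Function.comp_apply, ← winMatrix_restrict p hac (Nat.le_succ c), Matrix.submatrix_apply,
    id_eq]
  refine congrArg₂ (winMatrix p a c (c + 1)) (funext fun i => ?_) (funext fun i => ?_)
  · exact (Function.update_of_ne (Fin.ne_of_val_ne i.2.2.ne) _ _).symm
  · obtain ⟨i, hi⟩ := i
    obtain rfl : i = ⟨c, hc⟩ := Fin.ext (by simp only; omega)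
    exact (Function.update_self (⟨c, hc⟩ : Fin d) (lastCoord y) x).symm

lemma span_restrict_eq {n : ℕ → ℕ} {d : ℕ} [∀ i : Fin d, Nonempty (Fin (n i))]
    {p : PreIdx n d → ℝ} {a c : ℕ} (hac : a ≤ c) (hc : c < d) {C : Type*}
    {f : MidIdx n d a c → C → ℝ}
    (hf : colSpace (Matrix.of f) = colSpace (winMatrix p a c (c + 1))) :
    Submodule.span ℝ (Set.range fun α (x : PreIdx n d) => f (fun i => x i.1) α) =
      Submodule.span ℝ (Set.range fun v x =>
        windowMarginal p a (c + 1) (Function.update x ⟨c, hc⟩ v)) := by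
  rw [← colSpace_winMatrix_submatrix p hac hc, ← map_funLeft_colSpace, ← hf, map_funLeft_colSpace]
  rfl

variable {d₀ : ℕ} {n r : ℕ → ℕ} {p : PreIdx n (d₀ + 3) → ℝ} {B1 : Fin (n 0) → Fin (r 1) → ℝ}
  {Bmid : ∀ t : ℕ, Fin (n t) → Fin (n (t + 1)) → Fin (r (t + 2)) → ℝ}

/-- The tensors `B_1`, `Bmid t` and `p(x_{d-1}, x_d)` of `MarkovCDE` as a single family, indexed
from `0`, of functions of the full index. -/
noncomputable def sketchFamily (p : PreIdx n (d₀ + 3) → ℝ) (B1 : Fin (n 0) → Fin (r 1) → ℝ)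
    (Bmid : ∀ t : ℕ, Fin (n t) → Fin (n (t + 1)) → Fin (r (t + 2)) → ℝ) :
    ∀ k, k < d₀ + 3 → PreIdx n (d₀ + 3) → Fin (r (k + 1)) → ℝ
  | 0, h, x, α => B1 (x ⟨0, h⟩) α
  | t + 1, h, x, α =>
    if t ≤ d₀ then Bmid t (x ⟨t, Nat.lt_of_succ_lt h⟩) (x ⟨t + 1, h⟩) α
    else windowMarginal p t (t + 2) x

lemma isMarkovSketch_sketchFamily [∀ i : Fin (d₀ + 3), Nonempty (Fin (n i))]
    (hB1span :
      colSpace (Matrix.of fun (q : MidIdx n (d₀ + 3) 0 1) (α : Fin (r 1)) =>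
          B1 (q ⟨⟨0, by omega⟩, ⟨Nat.zero_le _, Nat.zero_lt_one⟩⟩) α) =
        colSpace (winMatrix p 0 1 2))
    (hBmidspan : ∀ t : ℕ, ∀ _ht : t ≤ d₀,
      colSpace (Matrix.of fun (q : MidIdx n (d₀ + 3) t (t + 2)) (α : Fin (r (t + 2))) =>
          Bmid t (q ⟨⟨t, by omega⟩, ⟨le_rfl, Nat.lt_succ_of_lt (Nat.lt_succ_self _)⟩⟩)
            (q ⟨⟨t + 1, by omega⟩, ⟨Nat.le_succ _, Nat.lt_succ_self _⟩⟩) α) =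
        colSpace (winMatrix p t (t + 2) (t + 3))) :
    IsMarkovSketch p (sketchFamily p B1 Bmid) where
  span_eq k hk := by
    cases k with
    | zero => exact span_restrict_eq (Nat.zero_le 1) hk hB1span
    | succ t =>
      have ht : t ≤ d₀ := by omega
      simp only [sketchFamily, if_pos ht]
      exact span_restrict_eq (by omega : t ≤ t + 2) hk (hBmidspan t ht)
  eq_windowMarginal k hk hkd x α := by
    obtain rfl : k = d₀ + 2 := by omega
    simp [sketchFamily]

lemma contractedSketch_sketchFamily_succ {t : ℕ} (ht : t ≤ d₀) (x : PreIdx n (d₀ + 3))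
    (α : Fin (r (t + 2))) :
    contractedSketch (sketchFamily p B1 Bmid) (t + 1) (by omega) x α =
      ∑ w, Bmid t w (x ⟨t + 1, by omega⟩) α := by
  simp [contractedSketch, sumPrev_succ_apply, sketchFamily, ht]

lemma exists_apply_eq_and_apply_succ_eq {n : ℕ → ℕ} {d : ℕ} [∀ i : Fin d, Nonempty (Fin (n i))]
    {k : ℕ} (hk : k + 1 < d) (v : Fin (n k)) (w : Fin (n (k + 1))) :
    ∃ x : PreIdx n d, x ⟨k, Nat.lt_of_succ_lt hk⟩ = v ∧ x ⟨k + 1, hk⟩ = w := by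
  let x₀ : PreIdx n d := Classical.arbitrary _
  exact ⟨Function.update (Function.update x₀ ⟨k, Nat.lt_of_succ_lt hk⟩ v) ⟨k + 1, hk⟩ w, by simp,
    by simp⟩

lemma markovCDE_iff_solvesReduced [∀ i : Fin (d₀ + 3), Nonempty (Fin (n i))]
    {G : CoreType n r (d₀ + 3)} :
    MarkovCDE d₀ n r p B1 Bmid G ↔ SolvesReduced (sketchFamily p B1 Bmid) G := by
  constructor
  · rintro ⟨hfirst, hsecond, hmid, hlast⟩
    refine ⟨fun hd a x α => hfirst a (x ⟨0, hd⟩) α, fun k hk x α => ?_⟩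
    cases k with
    | zero => exact hsecond (x ⟨0, _⟩) (x ⟨1, hk⟩) α
    | succ t =>
      simp only [contractedSketch_sketchFamily_succ (by omega : t ≤ d₀)]
      obtain ht | rfl : t + 1 ≤ d₀ ∨ t = d₀ := by omega
      · exact (hmid t ht _ _ α).trans (if_pos ht).symm
      · refine (hlast (fun i => x i.1) α).trans ?_
        rw [winMarg_restrict]
        exact (if_neg (by omega)).symm
  · rintro ⟨hfirst, hsucc⟩
    refine ⟨fun a v α => ?_, fun y v α => ?_, fun t ht y v α => ?_, fun q α => ?_⟩
    · obtain ⟨x, rfl⟩ := Function.surjective_eval (β := fun i : Fin (d₀ + 3) => Fin (n i))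
        ⟨0, by omega⟩ v
      exact hfirst (by omega) a x α
    · obtain ⟨x, rfl, rfl⟩ := exists_apply_eq_and_apply_succ_eq (d := d₀ + 3) (by omega) y v
      exact hsucc 0 (by omega) x α
    · obtain ⟨x, rfl, rfl⟩ := exists_apply_eq_and_apply_succ_eq (d := d₀ + 3) (by omega) y v
      have hx := hsucc (t + 1) (by omega) x α
      simp only [contractedSketch_sketchFamily_succ (by omega : t ≤ d₀)] at hx
      exact hx.trans (if_pos ht)
    · obtain ⟨x, rfl⟩ := Subtype.surjective_restrict (β := fun i : Fin (d₀ + 3) => Fin (n i)) _ q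
      have hx := hsucc (d₀ + 1) (by omega) x α
      simp only [contractedSketch_sketchFamily_succ le_rfl] at hx
      exact (hx.trans (if_neg (by omega))).trans (winMarg_restrict p _ _ x).symm

end ReducedEquations

theorem markov_ttrs_exact_recovery_general
    (d₀ : ℕ) (n r : ℕ → ℕ)
    (p : PreIdx n (d₀ + 3) → ℝ) (hp : IsMarkov p)
    (hrank : ∀ k, 1 ≤ k → k ≤ d₀ + 2 → mrank (unfold p k) = r k)
    (B1 : Fin (n 0) → Fin (r 1) → ℝ)
    (hB1span :
      colSpace (Matrix.of fun (q : MidIdx n (d₀ + 3) 0 1) (α : Fin (r 1)) =>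
          B1 (q ⟨⟨0, by omega⟩, ⟨Nat.zero_le _, Nat.zero_lt_one⟩⟩) α) =
        colSpace (winMatrix p 0 1 2))
    (Bmid : ∀ t : ℕ, Fin (n t) → Fin (n (t + 1)) → Fin (r (t + 2)) → ℝ)
    (hBmidspan : ∀ t : ℕ, ∀ _ht : t ≤ d₀,
      colSpace (Matrix.of fun (q : MidIdx n (d₀ + 3) t (t + 2)) (α : Fin (r (t + 2))) =>
          Bmid t (q ⟨⟨t, by omega⟩, ⟨le_rfl, Nat.lt_succ_of_lt (Nat.lt_succ_self _)⟩⟩)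
            (q ⟨⟨t + 1, by omega⟩, ⟨Nat.le_succ _, Nat.lt_succ_self _⟩⟩) α) =
        colSpace (winMatrix p t (t + 2) (t + 3)))
    (hr0 : r 0 = 1) (hrd : r (d₀ + 3) = 1) :
    (∃! G : CoreType n r (d₀ + 3), MarkovCDE d₀ n r p B1 Bmid G) ∧
      ∀ G : CoreType n r (d₀ + 3), MarkovCDE d₀ n r p B1 Bmid G →
        ∀ x, p x = ttContract G x := by
  have := Classical.nonempty_pi.1 hp.nonempty
  have hB : IsMarkovSketch p (sketchFamily p B1 Bmid) :=
    isMarkovSketch_sketchFamily hB1span hBmidspan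
  simp only [markovCDE_iff_solvesReduced]
  exact ⟨hB.existsUnique_solvesReduced hp fun k hk => (hrank (k + 1) (by omega) (by omega)).ge,
    fun _ hG => hB.eq_ttContract hp hG (by omega) hr0 hrd⟩

/-- Theorem: exact recovery of TT-RS for Markov models.
Let `p` be a discrete Markov model (`d = d₀ + 3 ≥ 3`) whose `k`-th unfolding matrix has
rank `r_k`.  Let `B_1` have orthonormal columns spanning the column space of the
pair-marginal matrix `p(x_1; x_2)`, for `2 ≤ k ≤ d-1` let `B_k` have orthonormal
columns spanning the column space of the triple-marginal matrix
`p((x_{k-1}, x_k); x_{k+1})`, and let `B_d` be the pair marginal `p(x_{d-1}, x_d)`.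
Then each of the reduced equations has a unique solution, and the solutions are
cores of a tensor-train representation of `p` of rank `(r_1, …, r_{d-1})`. -/
theorem markov_ttrs_exact_recovery
    (d₀ : ℕ) (n r : ℕ → ℕ) (hr0 : r 0 = 1) (hrd : r (d₀ + 3) = 1)
    (p : PreIdx n (d₀ + 3) → ℝ) (hp : IsMarkov p)
    (hrank : ∀ k, 1 ≤ k → k ≤ d₀ + 2 → mrank (unfold p k) = r k)
    (B1 : Fin (n 0) → Fin (r 1) → ℝ)
    (hB1ortho : (Matrix.of B1)ᵀ * Matrix.of B1 = 1)
    (hB1span :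
      colSpace (Matrix.of fun (q : MidIdx n (d₀ + 3) 0 1) (α : Fin (r 1)) =>
          B1 (q ⟨⟨0, by omega⟩, ⟨Nat.zero_le _, Nat.zero_lt_one⟩⟩) α) =
        colSpace (winMatrix p 0 1 2))
    (Bmid : ∀ t : ℕ, Fin (n t) → Fin (n (t + 1)) → Fin (r (t + 2)) → ℝ)
    (hBmidortho : ∀ t : ℕ, ∀ _ht : t ≤ d₀,
      (Matrix.of fun (q : Fin (n t) × Fin (n (t + 1))) (α : Fin (r (t + 2))) =>
          Bmid t q.1 q.2 α)ᵀ *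
        (Matrix.of fun (q : Fin (n t) × Fin (n (t + 1))) (α : Fin (r (t + 2))) =>
          Bmid t q.1 q.2 α) = 1)
    (hBmidspan : ∀ t : ℕ, ∀ _ht : t ≤ d₀,
      colSpace (Matrix.of fun (q : MidIdx n (d₀ + 3) t (t + 2)) (α : Fin (r (t + 2))) =>
          Bmid t (q ⟨⟨t, by omega⟩, ⟨le_rfl, Nat.lt_succ_of_lt (Nat.lt_succ_self _)⟩⟩)
            (q ⟨⟨t + 1, by omega⟩, ⟨Nat.le_succ _, Nat.lt_succ_self _⟩⟩) α) =
        colSpace (winMatrix p t (t + 2) (t + 3))) :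
    (∃! G : CoreType n r (d₀ + 3), MarkovCDE d₀ n r p B1 Bmid G) ∧
      ∀ G : CoreType n r (d₀ + 3), MarkovCDE d₀ n r p B1 Bmid G →
        ∀ x, p x = ttContract G x :=
  markov_ttrs_exact_recovery_general d₀ n r p hp hrank B1 hB1span Bmid hBmidspan hr0 hrd
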